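/- Let n ≥ k ≥ 2 be integers and let λ ∈ (0,1] satisfy λ ≥ k²/n. Let s be a λ-dispersed preference model on n items. Then for every item i ∈ {1,…,n} and every memory vector v ∈ Δ(n), the vector b_i ∈ Δ(n) defined by (b_i)_i = k/n and (b_i)_j = 1/n − (k−1)/(n(n−1)) for all j ≠ i lies in IRD(v). -/

import Mathlib

open Finset

/-- The choice distribution induced by preference model `s` at memory vector `v`
when menu `K` is shown. -/
noncomputable def menuDist {n : ℕ} (s : (Fin n → ℝ) → Fin n → ℝ)
    (v : Fin n → ℝ) (K : Finset (Fin n)) : Fin n → ℝ :=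
  fun i => if i ∈ K then s v i / ∑ j ∈ K, s v j else 0

/-- The set of instantaneously realizable distributions at memory vector `v`. -/
noncomputable def IRD {n : ℕ} (k : ℕ) (s : (Fin n → ℝ) → Fin n → ℝ)
    (v : Fin n → ℝ) : Set (Fin n → ℝ) :=
  convexHull ℝ { p | ∃ K : Finset (Fin n), K.card = k ∧ p = menuDist s v K }

/-!
Dividing coordinatewise by the scores `s` turns the menu distribution of `K` into a positive
multiple of the indicator of `K`. Hence a distribution `x` is realizable iff `x / s` lies in the
cone over the `k`-th hypersimplex, i.e. iff no coordinate of `x / s` exceeds a `1 / k` fraction of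
their total. For scores in `[λ, 1]` the total is at least `1`, and a boosted distribution has
`k * (x j / s j) ≤ k * (k / n) / λ ≤ 1`.

That indicators span the hypersimplex follows by separation: a linear functional on it is maximized
by placing full mass on the `k` largest coefficients.
-/

section Hypersimplex

/-- The `k`-th hypersimplex, given by its inequalities. It is the polytope whose vertices are the
indicators of the `k`-element sets, that is, of the menus of size `k`. -/
def hypersimplex (ι : Type*) [Fintype ι] (k : ℕ) : Set (ι → ℝ) :=
  {μ | (∀ j, μ j ∈ Set.Icc 0 1) ∧ ∑ j, μ j = k}

variable {ι : Type*} [Fintype ι] {k : ℕ}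

lemma le_card_of_mem_hypersimplex {μ : ι → ℝ} (hμ : μ ∈ hypersimplex ι k) :
    k ≤ Fintype.card ι := by
  have h : (k : ℝ) ≤ ∑ _j : ι, 1 := hμ.2 ▸ sum_le_sum fun j _ => (hμ.1 j).2
  simpa using h

lemma exists_card_eq_threshold {α : Type*} [LinearOrder α] [Nonempty α] (c : ι → α)
    (hk : k ≤ Fintype.card ι) :
    ∃ (K : Finset ι) (t : α), #K = k ∧ (∀ j ∈ K, t ≤ c j) ∧ ∀ j ∉ K, c j ≤ t := by
  classical
  induction k with
  | zero =>
    obtain ⟨t, ht⟩ := (univ.image c).exists_le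
    exact ⟨∅, t, card_empty, by simp, fun j _ => ht _ (mem_image_of_mem c (mem_univ j))⟩
  | succ k ih =>
    obtain ⟨K, t, hK, hge, hle⟩ := ih (by omega)
    have hne : Kᶜ.Nonempty := card_pos.1 (by rw [card_compl]; omega)
    obtain ⟨a, ha, hmax⟩ := Kᶜ.exists_max_image c hne
    rw [mem_compl] at ha
    refine ⟨insert a K, c a, by rw [card_insert_of_notMem ha, hK], fun j hj => ?_, fun j hj => ?_⟩
    · obtain rfl | hjK := mem_insert.1 hj
      · exact le_rfl
      · exact (hle a ha).trans (hge j hjK)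
    · exact hmax j (mem_compl.2 fun hjK => hj (mem_insert_of_mem hjK))

lemma exists_sum_mul_le_sum_of_mem_hypersimplex {μ : ι → ℝ} (hμ : μ ∈ hypersimplex ι k)
    (c : ι → ℝ) : ∃ K : Finset ι, #K = k ∧ ∑ j, μ j * c j ≤ ∑ j ∈ K, c j := by
  classical
  obtain ⟨K, t, hK, hge, hle⟩ := exists_card_eq_threshold c (le_card_of_mem_hypersimplex hμ)
  have hterm (j : ι) : μ j * (c j - t) ≤ if j ∈ K then c j - t else 0 := by
    split_ifs with hj
    · exact mul_le_of_le_one_left (sub_nonneg.2 (hge j hj)) (hμ.1 j).2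
    · exact mul_nonpos_of_nonneg_of_nonpos (hμ.1 j).1 (sub_nonpos.2 (hle j hj))
  refine ⟨K, hK, ?_⟩
  calc ∑ j, μ j * c j = ∑ j, μ j * (c j - t) + k * t := by
        simp only [mul_sub, sum_sub_distrib, ← sum_mul, hμ.2, sub_add_cancel]
    _ ≤ (∑ j, if j ∈ K then c j - t else 0) + k * t := by gcongr with j; exact hterm j
    _ = ∑ j ∈ K, c j := by
        simp only [sum_ite_mem, univ_inter, sum_sub_distrib, sum_const, hK, nsmul_eq_mul,
          sub_add_cancel]

theorem hypersimplex_subset_convexHull_indicator :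
    hypersimplex ι k ⊆
      convexHull ℝ ((fun K : Finset ι => (K : Set ι).indicator 1) '' {K | #K = k}) := by
  classical
  intro μ hμ
  by_contra hnot
  obtain ⟨f, u, hfu, huμ⟩ := geometric_hahn_banach_closed_point (convex_convexHull ℝ _)
    ((Set.toFinite _).isClosed_convexHull ℝ) hnot
  set c : ι → ℝ := fun j => f (Pi.single j 1)
  have hf (y : ι → ℝ) : f y = ∑ j, y j * c j := by
    conv_lhs => rw [pi_eq_sum_univ' y, map_sum]
    simp only [map_smul, smul_eq_mul, c]
  obtain ⟨K, hK, hle⟩ := exists_sum_mul_le_sum_of_mem_hypersimplex hμ c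
  have hfK : f ((K : Set ι).indicator 1) = ∑ j ∈ K, c j := by
    simp [hf, Set.indicator_apply]
  have hKu := hfu _ (subset_convexHull ℝ _ ⟨K, hK, rfl⟩)
  rw [hfK] at hKu
  rw [hf] at huμ
  exact (hle.trans_lt hKu).not_gt huμ

end Hypersimplex

section Realizable

variable {n k : ℕ} {s : (Fin n → ℝ) → Fin n → ℝ} {v : Fin n → ℝ}

lemma sum_smul_menuDist {K : Finset (Fin n)} (hK : ∑ j ∈ K, s v j ≠ 0) :
    (∑ j ∈ K, s v j) • menuDist s v K = s v * (K : Set (Fin n)).indicator 1 := by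
  ext j
  by_cases hj : j ∈ K <;> simp [menuDist, hj, mul_div_cancel₀ _ hK]

lemma menuDist_mem_stdSimplex {K : Finset (Fin n)} (hK : K.Nonempty) (hs : ∀ j, 0 < s v j) :
    menuDist s v K ∈ stdSimplex ℝ (Fin n) := by
  have hsum : 0 < ∑ j ∈ K, s v j := sum_pos (fun j _ => hs j) hK
  refine ⟨fun j => ?_, ?_⟩
  · exact ite_nonneg (div_nonneg (hs j).le hsum.le) le_rfl
  · simp only [menuDist, sum_ite_mem, univ_inter, ← sum_div, div_self hsum.ne']

lemma IRD_subset_stdSimplex (hk : 0 < k) (hs : ∀ j, 0 < s v j) :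
    IRD k s v ⊆ stdSimplex ℝ (Fin n) := by
  refine convexHull_min ?_ (convex_stdSimplex ℝ (Fin n))
  rintro _ ⟨K, rfl, rfl⟩
  exact menuDist_mem_stdSimplex (card_pos.1 hk) hs

lemma mem_IRD_of_mem_hull (hk : 0 < k) (hs : ∀ j, 0 < s v j) {x : Fin n → ℝ}
    (hx : x ∈ ConvexCone.hull ℝ (IRD k s v)) (hsum : ∑ j, x j = 1) : x ∈ IRD k s v := by
  have hconv : Convex ℝ (IRD k s v) := convex_convexHull ℝ _
  obtain ⟨r, -, hxr⟩ := (ConvexCone.mem_hull_of_convex hconv).1 hx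
  obtain ⟨y, hy, rfl⟩ := Set.mem_smul_set.1 hxr
  have hr : r = 1 := by
    simpa only [Pi.smul_apply, smul_eq_mul, ← mul_sum, (IRD_subset_stdSimplex hk hs hy).2,
      mul_one] using hsum
  rwa [hr, one_smul]

lemma mul_mem_hull_IRD (hk : 0 < k) (hs : ∀ j, 0 < s v j) {μ : Fin n → ℝ}
    (hμ : μ ∈ hypersimplex (Fin n) k) : s v * μ ∈ ConvexCone.hull ℝ (IRD k s v) := by
  have hconv := (ConvexCone.hull ℝ (IRD k s v)).convex.linear_preimage
    (LinearMap.mulLeft ℝ (s v))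
  refine convexHull_min ?_ hconv (hypersimplex_subset_convexHull_indicator hμ)
  rintro _ ⟨K, rfl, rfl⟩
  have hK : 0 < ∑ j ∈ K, s v j := sum_pos (fun j _ => hs j) (card_pos.1 hk)
  have hmem : menuDist s v K ∈ IRD #K s v := subset_convexHull ℝ _ ⟨K, rfl, rfl⟩
  have hsmul := ConvexCone.smul_mem _ hK (ConvexCone.subset_hull hmem)
  rwa [sum_smul_menuDist hK.ne'] at hsmul

theorem mem_IRD_of_mul_div_le_sum (hk : 0 < k) (hs : ∀ j, 0 < s v j) {x : Fin n → ℝ}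
    (hx : x ∈ stdSimplex ℝ (Fin n)) (hle : ∀ j, k * (x j / s v j) ≤ ∑ l, x l / s v l) :
    x ∈ IRD k s v := by
  set S := ∑ l, x l / s v l with hS
  have hnonneg (j : Fin n) : 0 ≤ x j / s v j := div_nonneg (hx.1 j) (hs j).le
  have hSpos : 0 < S := by
    obtain ⟨j, -, hj⟩ := exists_ne_zero_of_sum_ne_zero (hx.2.trans_ne one_ne_zero)
    exact sum_pos' (fun j _ => hnonneg j)
      ⟨j, mem_univ j, div_pos ((hx.1 j).lt_of_ne' hj) (hs j)⟩
  have hkS : 0 < k / S := div_pos (Nat.cast_pos.2 hk) hSpos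
  have hμ : (k / S) • (x / s v) ∈ hypersimplex (Fin n) k := by
    refine ⟨fun j => ⟨mul_nonneg hkS.le (hnonneg j), ?_⟩, ?_⟩
    · calc k / S * (x j / s v j) = k * (x j / s v j) / S := div_mul_eq_mul_div ..
        _ ≤ 1 := (div_le_one hSpos).2 (hle j)
    · simp only [Pi.smul_apply, Pi.div_apply, smul_eq_mul, ← mul_sum, ← hS,
        div_mul_cancel₀ _ hSpos.ne']
  have hscale : s v * (k / S) • (x / s v) = (k / S) • x := by
    rw [mul_smul_comm]
    exact congrArg _ (funext fun j => mul_div_cancel₀ (x j) (hs j).ne')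
  have hhull := mul_mem_hull_IRD hk hs hμ
  rw [hscale, ConvexCone.smul_mem_iff _ hkS] at hhull
  exact mem_IRD_of_mem_hull hk hs hhull hx.2

theorem mem_IRD_of_mul_le (hk : 0 < k) (hs : ∀ j, 0 < s v j) (hs1 : ∀ j, s v j ≤ 1)
    {x : Fin n → ℝ} (hx : x ∈ stdSimplex ℝ (Fin n)) (hle : ∀ j, k * x j ≤ s v j) :
    x ∈ IRD k s v :=
  mem_IRD_of_mul_div_le_sum hk hs hx fun j =>
    calc k * (x j / s v j) = k * x j / s v j := (mul_div_assoc ..).symm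
      _ ≤ 1 := (div_le_one (hs j)).2 (hle j)
      _ = ∑ l, x l := hx.2.symm
      _ ≤ ∑ l, x l / s v l := sum_le_sum fun l _ => le_div_self (hx.1 l) (hs l) (hs1 l)

end Realizable

section Boosted

variable {n : ℕ} {a : ℝ}

/-- The boosted distribution `b_i` on `n` items, with a real parameter `a` in place of the menu
size: item `i` has mass `a / n` and the remaining mass is shared equally. -/
noncomputable def boosted (a : ℝ) (i : Fin n) : Fin n → ℝ :=
  fun j => if j = i then a / n else 1 / n - (a - 1) / (n * ((n : ℝ) - 1))

lemma boosted_le (ha : 1 ≤ a) (i j : Fin n) : boosted a i j ≤ a / n := by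
  have hn : (1 : ℝ) ≤ n := by exact_mod_cast i.pos
  unfold boosted
  split_ifs
  · exact le_rfl
  · calc 1 / n - (a - 1) / (n * ((n : ℝ) - 1)) ≤ 1 / n :=
          sub_le_self _ (div_nonneg (by linarith) (mul_nonneg (by linarith) (by linarith)))
      _ ≤ a / n := by gcongr

lemma boosted_self (a : ℝ) (i : Fin n) : boosted a i i = a / n := if_pos rfl

lemma boosted_of_ne (a : ℝ) {i j : Fin n} (hij : j ≠ i) :
    boosted a i j = (n - a) / (n * (n - 1)) := by
  have hn : 1 < n := by have := Fin.val_ne_of_ne hij; omega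
  have hn1 : (n : ℝ) - 1 ≠ 0 := sub_ne_zero.2 (by exact_mod_cast hn.ne')
  have hn0 : (n : ℝ) ≠ 0 := by positivity
  rw [boosted, if_neg hij]
  field_simp
  ring

lemma sum_boosted (hn : 1 < n) (a : ℝ) (i : Fin n) : ∑ j, boosted a i j = 1 := by
  have hn1 : (n : ℝ) - 1 ≠ 0 := sub_ne_zero.2 (by exact_mod_cast hn.ne')
  have hn0 : (n : ℝ) ≠ 0 := by positivity
  calc ∑ j, boosted a i j
      = boosted a i i + ∑ j ∈ univ.erase i, boosted a i j :=
        (add_sum_erase _ _ (mem_univ i)).symm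
    _ = a / n + ∑ _j ∈ univ.erase i, (n - a) / (n * (n - 1)) := by
        rw [boosted_self, sum_congr rfl fun j hj => boosted_of_ne a (ne_of_mem_erase hj)]
    _ = a / n + (n - 1) * ((n - a) / (n * (n - 1))) := by
        rw [sum_const, card_erase_of_mem (mem_univ i), card_fin, nsmul_eq_mul,
          Nat.cast_pred i.pos]
    _ = 1 := by
        field_simp
        ring

lemma boosted_mem_stdSimplex (hn : 1 < n) (ha0 : 0 ≤ a) (han : a ≤ n) (i : Fin n) :
    boosted a i ∈ stdSimplex ℝ (Fin n) := by
  refine ⟨fun j => ?_, sum_boosted hn a i⟩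
  obtain rfl | hij := eq_or_ne j i
  · rw [boosted_self]
    positivity
  · have hn1 : (0 : ℝ) ≤ n - 1 := sub_nonneg.2 (by exact_mod_cast hn.le)
    rw [boosted_of_ne a hij]
    exact div_nonneg (sub_nonneg.2 han) (by positivity)

end Boosted

/-- For a `λ`-dispersed preference model with `λ ≥ k²/n`, the "boosted" distribution `b_i`
with `(b_i)_i = k/n` and `(b_i)_j = 1/n − (k−1)/(n(n−1))` for `j ≠ i` lies in `IRD(v)`
for every item `i` and memory vector `v`. -/
theorem boosted_mem_IRD {n k : ℕ} (hk : 2 ≤ k) (hkn : k ≤ n)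
    (lam : ℝ) (hlam0 : 0 < lam) (hlam1 : lam ≤ 1)
    (hlamn : (k : ℝ) ^ 2 / n ≤ lam)
    (s : (Fin n → ℝ) → Fin n → ℝ)
    (hdisp : ∀ v ∈ stdSimplex ℝ (Fin n), ∀ i, lam ≤ s v i ∧ s v i ≤ 1) :
    ∀ (i : Fin n), ∀ v ∈ stdSimplex ℝ (Fin n),
      (fun j : Fin n => if j = i then (k : ℝ) / n
        else 1 / n - ((k : ℝ) - 1) / (n * ((n : ℝ) - 1))) ∈ IRD k s v := by
  intro i v hv
  have hk1 : (1 : ℝ) ≤ k := by exact_mod_cast one_le_two.trans hk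
  have hx : boosted (k : ℝ) i ∈ stdSimplex ℝ (Fin n) :=
    boosted_mem_stdSimplex (hk.trans hkn) (by positivity) (by exact_mod_cast hkn) i
  refine mem_IRD_of_mul_le (by omega) (fun j => hlam0.trans_le (hdisp v hv j).1)
    (fun j => (hdisp v hv j).2) hx fun j => ?_
  calc (k : ℝ) * boosted (k : ℝ) i j ≤ k * (k / n) := by gcongr; exact boosted_le hk1 i j
    _ = (k : ℝ) ^ 2 / n := by ring
    _ ≤ lam := hlamn
    _ ≤ s v j := (hdisp v hv j).1
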